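/- Let τ be a substitution over A and x ∈ A^ℕ, L > 0 with |τ(x_i)| ≥ L for every i ∈ ℕ. Then for every y ∈ A^ℕ, 𝔡_L(τ̄(x), τ̄(y)) ≤ (‖τ‖_max/L)·𝔡_L(x,y). Consequently, if there exist constants ρ, α, β > 0 such that |τ^t(a)| ≤ α·ρ^t for every letter a ∈ A and every t ∈ ℕ, and |τ^t(x_i)| ≥ β·ρ^t for every i ∈ ℕ and every t ∈ ℕ, then for every y ∈ A^ℕ and every t ∈ ℕ, 𝔡_L(τ̄^t(x), τ̄^t(y)) ≤ (α/β)·𝔡_L(x,y); in particular x is an equicontinuous point of τ̄ in the Feldman space. -/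

import Mathlib

open Filter

/-- The finite factor `x_[i, i+n)` of the infinite word `x`. -/
def factor {A : Type*} (x : ℕ → A) (i n : ℕ) : List A := List.ofFn (fun k : Fin n => x (i + k))

/-- The shift map `σ` on infinite words. -/
def shift {A : Type*} (x : ℕ → A) : ℕ → A := fun i => x (i + 1)
/-- The maximal length of a common (not necessarily contiguous) subsequence of `u` and `v`. -/
noncomputable def lcs {A : Type*} (u v : List A) : ℕ :=
  sSup {n | ∃ w : List A, w.length = n ∧ w.Sublist u ∧ w.Sublist v}

/-- The (halved) Levenshtein distance `d_L(u,v) = (|u|+|v|)/2 - ℓ(u,v)`. -/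
noncomputable def levD {A : Type*} (u v : List A) : ℝ :=
  ((u.length : ℝ) + v.length) / 2 - lcs u v

/-- The Feldman pseudometric `𝔡_L`. -/
noncomputable def feld {A : Type*} (x y : ℕ → A) : ℝ :=
  limsup (fun l : ℕ => levD (factor x 0 l) (factor y 0 l) / l) atTop

/-- The extension of a substitution `τ` to finite words. -/
def tauStar {A : Type*} (τ : A → List A) (u : List A) : List A := (u.map τ).flatten

/-- The iterated substitution `τ^t`, as a map from letters to words. -/
def tauPow {A : Type*} (τ : A → List A) : ℕ → A → List A
  | 0, a => [a]
  | t + 1, a => tauStar τ (tauPow τ t a)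

/-- The substitution cocycle `∑_{j<n} |τ(z_j)|`. -/
def subCocycle {A : Type*} (τ : A → List A) (z : ℕ → A) (n : ℕ) : ℕ :=
  ∑ j ∈ Finset.range n, (τ (z j)).length

theorem aux_factor_eq {A : Type*} (x : ℕ → A) (n : ℕ) :
    factor x 0 n = (List.range n).map x := by
  unfold factor
  apply List.ext_getElem
  · simp
  · intro i h1 h2
    simp

theorem aux_factor_length {A : Type*} (x : ℕ → A) (n : ℕ) : (factor x 0 n).length = n := by
  simp [factor]

theorem aux_factor_take {A : Type*} (x : ℕ → A) {m n : ℕ} (h : m ≤ n) :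
    factor x 0 m = (factor x 0 n).take m := by
  rw [aux_factor_eq, aux_factor_eq, ← List.map_take, List.take_range, min_eq_left h]

theorem aux_factor_sublist {A : Type*} (x : ℕ → A) {m n : ℕ} (h : m ≤ n) :
    (factor x 0 m).Sublist (factor x 0 n) := by
  rw [aux_factor_take x h]; exact List.take_sublist _ _

theorem aux_factor_succ {A : Type*} (x : ℕ → A) (n : ℕ) :
    factor x 0 (n + 1) = factor x 0 n ++ [x n] := by
  rw [aux_factor_eq, aux_factor_eq, List.range_succ]; simp

theorem aux_tauStar_append {A : Type*} (τ : A → List A) (u v : List A) :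
    tauStar τ (u ++ v) = tauStar τ u ++ tauStar τ v := by
  simp [tauStar]

theorem aux_tauStar_cons {A : Type*} (τ : A → List A) (a : A) (v : List A) :
    tauStar τ (a :: v) = τ a ++ tauStar τ v := by
  simp [tauStar]

theorem aux_tauStar_sublist {A : Type*} (τ : A → List A) {u v : List A} (h : u.Sublist v) :
    (tauStar τ u).Sublist (tauStar τ v) := by
  induction h with
  | slnil => exact List.Sublist.refl _
  | cons a _ ih =>
    rw [aux_tauStar_cons]
    exact ih.trans (List.sublist_append_right _ _)
  | cons_cons a _ ih =>
    rw [aux_tauStar_cons, aux_tauStar_cons]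
    exact (List.Sublist.refl _).append ih

theorem aux_tauStar_length {A : Type*} (τ : A → List A) (M : ℝ)
    (hM : ∀ a, ((τ a).length : ℝ) ≤ M) {u v : List A} (h : u.Sublist v) :
    ((tauStar τ v).length : ℝ) ≤ (tauStar τ u).length + M * ((v.length : ℝ) - u.length) := by
  induction h with
  | slnil => simp
  | cons a _ ih =>
    rw [aux_tauStar_cons]
    have := hM a
    simp only [List.length_append, List.length_cons]
    push_cast
    linarith
  | cons_cons a _ ih =>
    rw [aux_tauStar_cons, aux_tauStar_cons]
    simp only [List.length_append, List.length_cons]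
    push_cast
    linarith

theorem aux_lcs_bdd {A : Type*} (u v : List A) :
    BddAbove {n | ∃ w : List A, w.length = n ∧ w.Sublist u ∧ w.Sublist v} := by
  refine ⟨u.length, ?_⟩
  rintro n ⟨w, rfl, h, -⟩
  exact h.length_le

theorem aux_le_lcs {A : Type*} {u v w : List A} (h1 : w.Sublist u) (h2 : w.Sublist v) :
    w.length ≤ lcs u v :=
  le_csSup (aux_lcs_bdd u v) ⟨w, rfl, h1, h2⟩

theorem aux_lcs_mem {A : Type*} (u v : List A) :
    ∃ w : List A, w.length = lcs u v ∧ w.Sublist u ∧ w.Sublist v :=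
  Nat.sSup_mem (s := {n | ∃ w : List A, w.length = n ∧ w.Sublist u ∧ w.Sublist v})
    ⟨0, [], rfl, List.nil_sublist _, List.nil_sublist _⟩ (aux_lcs_bdd u v)

theorem aux_levD {A : Type*} (x y : ℕ → A) (n : ℕ) :
    levD (factor x 0 n) (factor y 0 n) = n - lcs (factor x 0 n) (factor y 0 n) := by
  simp [levD, aux_factor_length]

theorem aux_levD_nonneg {A : Type*} (x y : ℕ → A) (n : ℕ) :
    0 ≤ levD (factor x 0 n) (factor y 0 n) := by
  rw [aux_levD]
  obtain ⟨w, hw, h1, -⟩ := aux_lcs_mem (factor x 0 n) (factor y 0 n)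
  have := h1.length_le
  rw [aux_factor_length, hw] at this
  have : (lcs (factor x 0 n) (factor y 0 n) : ℝ) ≤ n := by exact_mod_cast this
  linarith

theorem aux_levD_le {A : Type*} (x y : ℕ → A) (n : ℕ) :
    levD (factor x 0 n) (factor y 0 n) ≤ n := by
  rw [aux_levD]
  have : (0 : ℝ) ≤ lcs (factor x 0 n) (factor y 0 n) := Nat.cast_nonneg _
  linarith

theorem aux_core {A : Type*} (σ : A → List A) (M : ℝ)
    (hM : ∀ a, ((σ a).length : ℝ) ≤ M) (x y X Y : ℕ → A)
    (hX : ∀ n, factor X 0 (tauStar σ (factor x 0 n)).length = tauStar σ (factor x 0 n))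
    (hY : ∀ n, factor Y 0 (tauStar σ (factor y 0 n)).length = tauStar σ (factor y 0 n))
    (l N : ℕ) (h1 : (tauStar σ (factor x 0 l)).length ≤ N)
    (h2 : N < (tauStar σ (factor x 0 (l + 1))).length) :
    levD (factor X 0 N) (factor Y 0 N) ≤ M * levD (factor x 0 l) (factor y 0 l) + M := by
  rw [aux_levD, aux_levD]
  obtain ⟨w, hw, hwx, hwy⟩ := aux_lcs_mem (factor x 0 l) (factor y 0 l)
  have lx := aux_tauStar_length σ M hM hwx
  have ly := aux_tauStar_length σ M hM hwy
  rw [aux_factor_length, hw] at lx ly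
  have M0 : 0 ≤ M := le_trans (Nat.cast_nonneg _) (hM (x 0))
  have sx : (tauStar σ w).Sublist (factor X 0 N) := by
    refine (aux_tauStar_sublist σ hwx).trans ?_
    rw [← hX l]
    exact aux_factor_sublist X h1
  have sy := aux_tauStar_sublist σ hwy
  rcases le_total (tauStar σ (factor y 0 l)).length N with h | h
  · have sy' : (tauStar σ w).Sublist (factor Y 0 N) := by
      refine sy.trans ?_
      rw [← hY l]
      exact aux_factor_sublist Y h
    have := aux_le_lcs sx sy'
    have : ((tauStar σ w).length : ℝ) ≤ lcs (factor X 0 N) (factor Y 0 N) := by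
      exact_mod_cast this
    rw [aux_factor_succ, aux_tauStar_append, aux_tauStar_cons] at h2
    have h3 : (N : ℝ) < (tauStar σ (factor x 0 l)).length + (σ (x l)).length := by
      have : N < (tauStar σ (factor x 0 l)).length + (σ (x l)).length := by
        simpa [tauStar] using h2
      exact_mod_cast this
    have := hM (x l)
    linarith
  · have e : factor Y 0 N = (tauStar σ (factor y 0 l)).take N := by
      rw [← hY l]; exact aux_factor_take Y h
    rw [← List.take_append_drop N (tauStar σ (factor y 0 l)), List.sublist_append_iff] at sy
    obtain ⟨s1, s2, hs, hs1, hs2⟩ := sy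
    rw [← e] at hs1
    have q1 : s1.Sublist (factor X 0 N) := by
      refine List.Sublist.trans ?_ sx
      rw [hs]; exact List.sublist_append_left _ _
    have q2 := aux_le_lcs q1 hs1
    have q3 := hs2.length_le
    rw [List.length_drop] at q3
    have q4 : (tauStar σ w).length = s1.length + s2.length := by rw [hs]; simp
    have q5 : (tauStar σ w).length + N ≤
        lcs (factor X 0 N) (factor Y 0 N) + (tauStar σ (factor y 0 l)).length := by omega
    have q6 : ((tauStar σ w).length : ℝ) + N ≤
        lcs (factor X 0 N) (factor Y 0 N) + (tauStar σ (factor y 0 l)).length := by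
      exact_mod_cast q5
    linarith

theorem aux_general {A : Type*} (σ : A → List A) (M L : ℝ) (hL : 0 < L)
    (hM : ∀ a, ((σ a).length : ℝ) ≤ M) (x y X Y : ℕ → A)
    (hx : ∀ i, L ≤ ((σ (x i)).length : ℝ))
    (hX : ∀ n, factor X 0 (tauStar σ (factor x 0 n)).length = tauStar σ (factor x 0 n))
    (hY : ∀ n, factor Y 0 (tauStar σ (factor y 0 n)).length = tauStar σ (factor y 0 n)) :
    feld X Y ≤ M / L * feld x y := by
  have M0 : 0 < M := lt_of_lt_of_le hL ((hx 0).trans (hM (x 0)))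
  have low : ∀ n : ℕ, L * n ≤ ((tauStar σ (factor x 0 n)).length : ℝ) := by
    intro n
    induction n with
    | zero => simp
    | succ n ih =>
      rw [aux_factor_succ, aux_tauStar_append, List.length_append]
      have := hx n
      have e : (tauStar σ [x n]).length = (σ (x n)).length := by simp [tauStar]
      rw [e]; push_cast; linarith
  have up : ∀ n : ℕ, ((tauStar σ (factor x 0 n)).length : ℝ) ≤ M * n := by
    intro n
    have := aux_tauStar_length σ M hM (List.nil_sublist (factor x 0 n))
    simpa [aux_factor_length, tauStar] using this
  have ex : ∀ N : ℕ, ∃ l : ℕ, (tauStar σ (factor x 0 l)).length ≤ N ∧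
      N < (tauStar σ (factor x 0 (l + 1))).length := by
    intro N
    have hex : ∃ k : ℕ, N < (tauStar σ (factor x 0 k)).length := by
      obtain ⟨k, hk⟩ := exists_nat_gt ((N : ℝ) / L)
      refine ⟨k, ?_⟩
      rw [div_lt_iff₀ hL] at hk
      have := low k
      have : (N : ℝ) < (tauStar σ (factor x 0 k)).length := by linarith
      exact_mod_cast this
    classical
    have hs := Nat.find_spec hex
    have h0 : Nat.find hex ≠ 0 := by
      intro h0
      rw [h0] at hs
      simp [factor, tauStar] at hs
    obtain ⟨l, hl⟩ := Nat.exists_eq_succ_of_ne_zero h0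
    refine ⟨l, ?_, ?_⟩
    · have := Nat.find_min hex (m := l) (by omega)
      omega
    · rw [hl] at hs; exact hs
  choose l hl1 hl2 using ex
  have hlN : ∀ N : ℕ, (N : ℝ) ≤ M * (l N + 1) := by
    intro N
    have h := up (l N + 1)
    have h' : (N : ℝ) < (tauStar σ (factor x 0 (l N + 1))).length := by exact_mod_cast hl2 N
    push_cast at h
    linarith
  have hLl : ∀ N : ℕ, L * l N ≤ N := by
    intro N
    have h' : ((tauStar σ (factor x 0 (l N))).length : ℝ) ≤ N := by exact_mod_cast hl1 N
    linarith [low (l N)]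
  have hlt : Tendsto l atTop atTop := by
    rw [tendsto_atTop]
    intro b
    obtain ⟨K, hK⟩ := exists_nat_gt (M * (b + 1))
    filter_upwards [eventually_ge_atTop K] with N hN
    have h1 := hlN N
    have h2 : (K : ℝ) ≤ N := by exact_mod_cast hN
    have h3 : M * ((b : ℝ) + 1) < M * (l N + 1) := by linarith
    have h4 := lt_of_mul_lt_mul_left h3 M0.le
    have h5 : (b : ℝ) < l N := by linarith
    exact le_of_lt (by exact_mod_cast h5)
  have bdd : ∀ x y : ℕ → A, ∀ n : ℕ, levD (factor x 0 n) (factor y 0 n) / n ≤ 1 := by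
    intro x y n
    exact div_le_one_of_le₀ (aux_levD_le x y n) (Nat.cast_nonneg _)
  have nn : ∀ x y : ℕ → A, ∀ n : ℕ, 0 ≤ levD (factor x 0 n) (factor y 0 n) / n := by
    intro x y n
    exact div_nonneg (aux_levD_nonneg x y n) (Nat.cast_nonneg _)
  have c0 : 0 < M / L := div_pos M0 hL
  apply le_of_forall_pos_le_add
  intro ε hε
  set η : ℝ := ε / (2 * (M / L)) with hη
  have η0 : 0 < η := by positivity
  have ηe : M / L * η = ε / 2 := by rw [hη]; field_simp
  have ev : ∀ᶠ n : ℕ in atTop,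
      levD (factor x 0 n) (factor y 0 n) / n < feld x y + η := by
    apply eventually_lt_of_limsup_lt
    · exact lt_add_of_pos_right _ η0
    · exact isBoundedUnder_of ⟨1, bdd x y⟩
  have ev2 := hlt.eventually ev
  have ev3 := hlt.eventually (eventually_ge_atTop 1)
  have ev4 : ∀ᶠ N : ℕ in atTop, M / N < ε / 2 :=
    (tendsto_const_div_atTop_nhds_zero_nat M).eventually (gt_mem_nhds (half_pos hε))
  unfold feld at *
  apply limsup_le_of_le
  · exact (isBoundedUnder_of ⟨0, nn X Y⟩ : IsBoundedUnder (· ≥ ·) atTop _).isCoboundedUnder_le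
  filter_upwards [ev2, ev3, ev4] with N h2 h3 h4
  have hc := aux_core σ M hM x y X Y hX hY (l N) N (hl1 N) (hl2 N)
  have l0 : (0 : ℝ) < l N := by exact_mod_cast h3
  have Ll0 : 0 < L * (l N : ℝ) := mul_pos hL l0
  have N0 : (0 : ℝ) < N := lt_of_lt_of_le Ll0 (hLl N)
  have d0 := aux_levD_nonneg x y (l N)
  calc levD (factor X 0 N) (factor Y 0 N) / N
      ≤ (M * levD (factor x 0 (l N)) (factor y 0 (l N)) + M) / N := by gcongr
    _ = M * levD (factor x 0 (l N)) (factor y 0 (l N)) / N + M / N := by ring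
    _ ≤ M * levD (factor x 0 (l N)) (factor y 0 (l N)) / (L * l N) + M / N := by
        gcongr
        exact hLl N
    _ = M / L * (levD (factor x 0 (l N)) (factor y 0 (l N)) / l N) + M / N := by
        rw [mul_div_mul_comm]
    _ ≤ M / L * (limsup (fun l : ℕ => levD (factor x 0 l) (factor y 0 l) / l) atTop + η)
          + ε / 2 := by
        gcongr
    _ = _ := by rw [mul_add, ηe]; ring

theorem aux_tauStar_tauStar {A : Type*} (τ : A → List A) (t : ℕ) (u : List A) :
    tauStar (tauPow τ (t + 1)) u = tauStar τ (tauStar (tauPow τ t) u) := by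
  induction u with
  | nil => rfl
  | cons a u ih =>
    rw [aux_tauStar_cons, aux_tauStar_cons, aux_tauStar_append, ih]; rfl

theorem aux_G {A : Type*} (τ : A → List A)
    (G : (ℕ → A) → ℕ → A)
    (hG : ∀ (z : ℕ → A) (n k : ℕ) (h : k < (τ (z n)).length),
      G z (subCocycle τ z n + k) = (τ (z n)).get ⟨k, h⟩) (z : ℕ → A) (n : ℕ) :
    factor (G z) 0 (tauStar τ (factor z 0 n)).length = tauStar τ (factor z 0 n) := by
  have hc : ∀ n, (tauStar τ (factor z 0 n)).length = subCocycle τ z n := by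
    intro n
    induction n with
    | zero => simp [factor, tauStar, subCocycle]
    | succ n ih =>
      rw [aux_factor_succ, aux_tauStar_append, List.length_append, ih]
      simp [subCocycle, Finset.sum_range_succ, tauStar]
  induction n with
  | zero => simp [factor, tauStar]
  | succ n ih =>
    rw [hc] at ih ⊢
    rw [aux_factor_succ, aux_tauStar_append, ← ih]
    have e : subCocycle τ z (n + 1) = subCocycle τ z n + (τ (z n)).length := by
      simp [subCocycle, Finset.sum_range_succ]
    have e2 : tauStar τ [z n] = τ (z n) := by simp [tauStar]
    rw [e, e2, aux_factor_eq, aux_factor_eq, List.range_add, List.map_append]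
    congr 1
    apply List.ext_getElem
    · simp
    · intro i h1 h2
      simpa using hG z n i h2

theorem aux_G_iter {A : Type*} (τ : A → List A)
    (G : (ℕ → A) → ℕ → A)
    (hG : ∀ (z : ℕ → A) (n k : ℕ) (h : k < (τ (z n)).length),
      G z (subCocycle τ z n + k) = (τ (z n)).get ⟨k, h⟩) (z : ℕ → A) (t n : ℕ) :
    factor (G^[t] z) 0 (tauStar (tauPow τ t) (factor z 0 n)).length
      = tauStar (tauPow τ t) (factor z 0 n) := by
  induction t with
  | zero =>
    have : ∀ u : List A, tauStar (tauPow τ 0) u = u := by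
      intro u
      induction u with
      | nil => rfl
      | cons a u ih => rw [aux_tauStar_cons, ih]; rfl
    rw [this, aux_factor_length]; rfl
  | succ t ih =>
    rw [aux_tauStar_tauStar, Function.iterate_succ_apply']
    have := aux_G τ G hG (G^[t] z) (tauStar (tauPow τ t) (factor z 0 n)).length
    rw [ih] at this
    exact this

/-- Let `τ` be a substitution and `x` with `|τ(x_i)| ≥ L` for all `i` (`L > 0`). Then
`𝔡_L(τ̄(x), τ̄(y)) ≤ (‖τ‖_max/L)·𝔡_L(x,y)` for all `y` (with `G = τ̄`). Consequently,
if `|τ^t(a)| ≤ α·ρ^t` for all letters `a` and `|τ^t(x_i)| ≥ β·ρ^t` for all `i, t`, then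
`𝔡_L(τ̄^t(x), τ̄^t(y)) ≤ (α/β)·𝔡_L(x,y)` for all `y, t`; in particular `x` is an
equicontinuous point of `τ̄` in the Feldman space. -/
theorem substitution_feld_equicontinuous_point {A : Type*} [Fintype A] [Nonempty A]
    (τ : A → List A) (hτ : ∀ a, τ a ≠ [])
    (G : (ℕ → A) → ℕ → A)
    (hG : ∀ (z : ℕ → A) (n k : ℕ) (h : k < (τ (z n)).length),
      G z (subCocycle τ z n + k) = (τ (z n)).get ⟨k, h⟩)
    (x : ℕ → A) (L : ℕ) (hL : 0 < L) (hx : ∀ i : ℕ, L ≤ (τ (x i)).length) :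
    (∀ y : ℕ → A,
      feld (G x) (G y) ≤ ((sSup {n | ∃ a : A, (τ a).length = n} : ℝ) / L) * feld x y) ∧
    (∀ ρ α β : ℝ, 0 < ρ → 0 < α → 0 < β →
      (∀ (a : A) (t : ℕ), ((tauPow τ t a).length : ℝ) ≤ α * ρ ^ t) →
      (∀ (i t : ℕ), β * ρ ^ t ≤ ((tauPow τ t (x i)).length : ℝ)) →
      (∀ (y : ℕ → A) (t : ℕ), feld (G^[t] x) (G^[t] y) ≤ (α / β) * feld x y) ∧
      (∀ ε : ℝ, 0 < ε → ∃ δ : ℝ, 0 < δ ∧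
        ∀ y : ℕ → A, feld x y < δ → ∀ t : ℕ, feld (G^[t] x) (G^[t] y) < ε)) := by
  have key : ∀ ρ α β : ℝ, 0 < ρ → 0 < α → 0 < β →
      (∀ (a : A) (t : ℕ), ((tauPow τ t a).length : ℝ) ≤ α * ρ ^ t) →
      (∀ (i t : ℕ), β * ρ ^ t ≤ ((tauPow τ t (x i)).length : ℝ)) →
      (∀ (y : ℕ → A) (t : ℕ), feld (G^[t] x) (G^[t] y) ≤ (α / β) * feld x y) := by
    intro ρ α β hρ hα hβ h1 h2 y t
    have hp : 0 < ρ ^ t := pow_pos hρ t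
    have h := aux_general (tauPow τ t) (α * ρ ^ t) (β * ρ ^ t) (mul_pos hβ hp)
      (fun a => h1 a t) x y (G^[t] x) (G^[t] y) (fun i => h2 i t)
      (aux_G_iter τ G hG x t) (aux_G_iter τ G hG y t)
    rwa [mul_div_mul_right _ _ hp.ne'] at h
  refine ⟨?_, ?_⟩
  · intro y
    refine aux_general τ _ L (by exact_mod_cast hL) ?_ x y (G x) (G y)
      (fun i => by exact_mod_cast hx i) (aux_G τ G hG x) (aux_G τ G hG y)
    intro a
    refine le_csSup ?_ ⟨a, rfl⟩
    exact (Set.finite_range (fun a : A => ((τ a).length : ℝ))).bddAbove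
  · intro ρ α β hρ hα hβ h1 h2
    have k := key ρ α β hρ hα hβ h1 h2
    refine ⟨k, ?_⟩
    intro ε hε
    have c0 : 0 < α / β := div_pos hα hβ
    refine ⟨ε / (α / β), div_pos hε c0, ?_⟩
    intro y hy t
    refine lt_of_le_of_lt (k y t) ?_
    rw [lt_div_iff₀ c0] at hy
    linarith
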